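/- Let X be a finite chain (a finite linearly ordered set) with |X| ≥ 2 and let φ be a Lie algebra automorphism of I(X,K). Then φ is a regular Hom-Lie structure on I(X,K) if and only if there exist a unit β of I(X,K) and a K-linear map ν : I(X,K) → I(X,K) all of whose values are scalar multiples of δ and which vanishes on J(I(X,K)), such that φ = ξ_β + ν. Moreover ν is unique, and if |X| > 2 then β can be chosen uniquely subject to β(x,x) = 1 for all x and β − δ ∈ Z(J(I(X,K))). -/

import Mathlib

open IncidenceAlgebra

attribute [local instance 100] LieRing.ofAssociativeRing

/-- The Hom-Jacobi identity for a map `φ` on a Lie ring. -/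
def HomJacobi {A : Type*} [LieRing A] (φ : A → A) : Prop :=
  ∀ a b c : A, ⁅⁅a, b⁆, φ c⁆ + ⁅⁅b, c⁆, φ a⁆ + ⁅⁅c, a⁆, φ b⁆ = 0

/-- `φ` is a regular Hom-Lie structure: a Lie algebra automorphism satisfying Hom-Jacobi. -/
def IsRegHomLie (K : Type*) {A : Type*} [CommRing K] [LieRing A] [LieAlgebra K A]
    (φ : A → A) : Prop :=
  (∃ e : A ≃ₗ⁅K⁆ A, ⇑e = φ) ∧ HomJacobi φ

/-- The "matrix unit" `e_{xy}` of the incidence algebra, for `x ≤ y`. -/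
def eSingle (K : Type*) [Field K] {X : Type*} [PartialOrder X] [DecidableEq X]
    (x y : X) (_h : x ≤ y) : IncidenceAlgebra K X where
  toFun u v := if u = x ∧ v = y then 1 else 0
  eq_zero_of_not_le' u v huv := by
    split_ifs with h'
    · exact absurd (by rw [h'.1, h'.2]; exact _h) huv
    · rfl

/-- The multiplicative map `M_σ` on the incidence algebra: `(M_σ f)(x,y) = σ(x,y) f(x,y)`. -/
def Mmul (K : Type*) [Field K] {X : Type*} [PartialOrder X]
    (σ : X → X → K) (f : IncidenceAlgebra K X) : IncidenceAlgebra K X where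
  toFun u v := σ u v * f u v
  eq_zero_of_not_le' u v huv := by
    rw [apply_eq_zero_of_not_le huv f, mul_zero]

/-- The conjugation map `ξ_β : f ↦ β f β⁻¹`. -/
noncomputable def xiMap {K : Type*} [Field K] {X : Type*} [PartialOrder X] [DecidableEq X]
    [LocallyFiniteOrder X] (β : IncidenceAlgebra K X) :
    IncidenceAlgebra K X → IncidenceAlgebra K X :=
  fun f => β * f * Ring.inverse β

/-- `l(x,y)`: the maximal length of a chain from `x` to `y`. -/
noncomputable def chainLen {X : Type*} [PartialOrder X] (x y : X) : ℕ :=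
  sSup {n : ℕ | ∃ c : Fin (n + 1) → X, StrictMono c ∧ c 0 = x ∧ c (Fin.last n) = y}

/-- `J^m`: the `K`-span of the `e_{xy}` with `x < y` and `l(x,y) ≥ m`. -/
noncomputable def Jpow (K : Type*) [Field K] {X : Type*} [PartialOrder X] [DecidableEq X]
    (m : ℕ) : Submodule K (IncidenceAlgebra K X) :=
  Submodule.span K {f | ∃ x y, ∃ h : x < y, m ≤ chainLen x y ∧ f = eSingle K x y h.le}

/-!
By the ordinary Jacobi identity, `ψ = φ - id` satisfies the Hom-Jacobi identity whenever `φ` does.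
Evaluating it on triples of matrix units shows that `ψ` takes values in `K·δ ⊕ K·e_{⊥⊤}`, the
centralizer of the radical; this is also sufficient, since commutators have zero diagonal. Write
`φ f = f + a f • δ + b f • e_{⊥⊤}`. Comparing `φ ⁅g, h⁆` with `⁅φ g, φ h⁆` shows that `a` kills
commutators, hence the radical, and that `b` is determined by `b e_{⊥⊥}` and `b e_{⊥⊤}`, the latter
being zero as soon as some `z` lies strictly between `⊥` and `⊤`. These two scalars are exactly what
conjugation by a matrix `δ + (t - 1) e_{⊥⊥} + u e_{⊥⊤}` can realize.
-/

section PartialOrder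

variable {K : Type*} [Field K] {X : Type*} [PartialOrder X]

section Mul

variable [LocallyFiniteOrder X]

theorem incidence_mul_apply_self (f g : IncidenceAlgebra K X) (x : X) :
    (f * g) x x = f x x * g x x := by
  simp

theorem incidence_mul_apply_of_Ioo {f g : IncidenceAlgebra K X} {p q : X} (hpq : p < q)
    (h : ∀ z, p < z → z < q → f p z * g z q = 0) :
    (f * g) p q = f p p * g p q + f p q * g q q := by
  classical
  rw [mul_apply, ← Finset.sum_pair (f := fun z ↦ f p z * g z q) hpq.ne]
  refine (Finset.sum_subset ?_ ?_).symm
  · simp [Finset.insert_subset_iff, hpq.le]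
  · intro z hz hz'
    rw [Finset.mem_Icc] at hz
    rw [Finset.mem_insert, Finset.mem_singleton, not_or] at hz'
    exact h z (hz.1.lt_of_ne' hz'.1) (hz.2.lt_of_ne hz'.2)

end Mul

variable [DecidableEq X]

theorem eSingle_apply {x y : X} (h : x ≤ y) (u v : X) :
    eSingle K x y h u v = if u = x ∧ v = y then 1 else 0 :=
  rfl

theorem eSingle_apply_same {x y : X} (h : x ≤ y) : eSingle K x y h x y = 1 := by
  simp [eSingle_apply]

theorem eSingle_apply_diag {x y : X} (h : x < y) (z : X) : eSingle K x y h.le z z = 0 :=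
  if_neg fun hz ↦ h.ne (hz.1.symm.trans hz.2)

theorem eSingle_ne_zero {x y : X} (h : x ≤ y) : eSingle K x y h ≠ 0 := fun h0 ↦
  one_ne_zero ((eSingle_apply_same h).symm.trans (congrArg (· x y) h0))

variable [LocallyFiniteOrder X]

theorem incidence_lie_apply_self (f g : IncidenceAlgebra K X) (x : X) : ⁅f, g⁆ x x = 0 := by
  rw [Ring.lie_def, IncidenceAlgebra.sub_apply, incidence_mul_apply_self,
    incidence_mul_apply_self, mul_comm, sub_self]

theorem incidence_lie_apply_of_Ioo {f g : IncidenceAlgebra K X} {p q : X} (hpq : p < q)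
    (hfg : ∀ z, p < z → z < q → f p z * g z q = 0)
    (hgf : ∀ z, p < z → z < q → g p z * f z q = 0) :
    ⁅f, g⁆ p q = (f p p - f q q) * g p q - (g p p - g q q) * f p q := by
  rw [Ring.lie_def, IncidenceAlgebra.sub_apply, incidence_mul_apply_of_Ioo hpq hfg,
    incidence_mul_apply_of_Ioo hpq hgf]
  ring

theorem eSingle_mul_apply {x y : X} (h : x ≤ y) (f : IncidenceAlgebra K X) (u v : X) :
    (eSingle K x y h * f) u v = if u = x then f y v else 0 := by
  rw [mul_apply, Finset.sum_eq_single y]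
  · simp [eSingle_apply]
  · intro z _ hz
    simp [eSingle_apply, hz]
  · intro hy
    rw [Finset.mem_Icc, not_and_or] at hy
    rcases hy with hy | hy
    · rw [apply_eq_zero_of_not_le hy, zero_mul]
    · rw [apply_eq_zero_of_not_le hy, mul_zero]

theorem mul_eSingle_apply {x y : X} (h : x ≤ y) (f : IncidenceAlgebra K X) (u v : X) :
    (f * eSingle K x y h) u v = if v = y then f u x else 0 := by
  rw [mul_apply, Finset.sum_eq_single x]
  · simp [eSingle_apply]
  · intro z _ hz
    simp [eSingle_apply, hz]
  · intro hx
    rw [Finset.mem_Icc, not_and_or] at hx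
    rcases hx with hx | hx
    · rw [apply_eq_zero_of_not_le hx, zero_mul]
    · rw [apply_eq_zero_of_not_le hx, mul_zero]

theorem lie_eSingle_apply {x y : X} (h : x ≤ y) (f : IncidenceAlgebra K X) (u v : X) :
    ⁅eSingle K x y h, f⁆ u v = (if u = x then f y v else 0) - if v = y then f u x else 0 := by
  rw [Ring.lie_def, IncidenceAlgebra.sub_apply, eSingle_mul_apply, mul_eSingle_apply]

theorem eSingle_mul_eSingle {x y z : X} (h : x ≤ y) (h' : y ≤ z) :
    eSingle K x y h * eSingle K y z h' = eSingle K x z (h.trans h') := by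
  ext u v _
  rw [eSingle_mul_apply]
  simp [eSingle_apply, ite_and]

theorem eSingle_mul_eSingle_of_ne {x y z w : X} (h : x ≤ y) (h' : z ≤ w) (hyz : y ≠ z) :
    eSingle K x y h * eSingle K z w h' = 0 := by
  ext u v _
  rw [eSingle_mul_apply]
  simp [eSingle_apply, hyz]

theorem lie_eSingle_eSingle {x y z : X} (h : x ≤ y) (h' : y ≤ z) (hxz : x ≠ z) :
    ⁅eSingle K x y h, eSingle K y z h'⁆ = eSingle K x z (h.trans h') := by
  rw [Ring.lie_def, eSingle_mul_eSingle, eSingle_mul_eSingle_of_ne h' h hxz.symm, sub_zero]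

theorem lie_eSingle_eSingle_of_ne {x y z w : X} (h : x ≤ y) (h' : z ≤ w) (hyz : y ≠ z)
    (hwx : w ≠ x) : ⁅eSingle K x y h, eSingle K z w h'⁆ = 0 := by
  rw [Ring.lie_def, eSingle_mul_eSingle_of_ne h h' hyz, eSingle_mul_eSingle_of_ne h' h hwx,
    sub_zero]

theorem lie_lie_eSingle_self {x y : X} (h : x < y) (f : IncidenceAlgebra K X) :
    ⁅⁅eSingle K x x le_rfl, f⁆, eSingle K y y le_rfl⁆ = f x y • eSingle K x y h.le := by
  ext u v _
  rw [← lie_skew, IncidenceAlgebra.neg_apply, lie_eSingle_apply, lie_eSingle_apply,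
    lie_eSingle_apply]
  simp only [constSMul_apply, eSingle_apply, smul_eq_mul, h.ne', if_false,
    apply_eq_zero_of_not_le h.not_ge f]
  split_ifs <;> simp_all

theorem apply_row_eq_zero_of_lie_eSingle {x y v : X} {h : x ≤ y} {f : IncidenceAlgebra K X}
    (hf : ⁅eSingle K x y h, f⁆ = 0) (hv : v ≠ y) : f y v = 0 := by
  simpa [lie_eSingle_apply, hv] using congrArg (· x v) hf

theorem apply_col_eq_zero_of_lie_eSingle {x y u : X} {h : x ≤ y} {f : IncidenceAlgebra K X}
    (hf : ⁅eSingle K x y h, f⁆ = 0) (hu : u ≠ x) : f u x = 0 := by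
  simpa [lie_eSingle_apply, hu] using congrArg (· u y) hf

theorem apply_diag_eq_of_lie_eSingle {x y : X} {h : x ≤ y} {f : IncidenceAlgebra K X}
    (hf : ⁅eSingle K x y h, f⁆ = 0) : f x x = f y y := by
  have h0 : f y y - f x x = 0 := by simpa [lie_eSingle_apply] using congrArg (· x y) hf
  exact (sub_eq_zero.1 h0).symm

theorem xiMap_eq_iff {β : IncidenceAlgebra K X} (hβ : IsUnit β) {f g : IncidenceAlgebra K X} :
    xiMap β f = g ↔ β * f = g * β := by
  constructor
  · rintro rfl
    rw [xiMap, mul_assoc, Ring.inverse_mul_cancel β hβ, mul_one]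
  · intro h
    rw [xiMap, h, mul_assoc, Ring.mul_inverse_cancel β hβ, mul_one]

theorem xiMap_apply_self {β : IncidenceAlgebra K X} (hβ : IsUnit β) (f : IncidenceAlgebra K X)
    (x : X) : xiMap β f x x = f x x := by
  have hβx : β x x * Ring.inverse β x x = 1 := by
    rw [← incidence_mul_apply_self, Ring.mul_inverse_cancel β hβ, one_apply, if_pos rfl]
  rw [xiMap, incidence_mul_apply_self, incidence_mul_apply_self, mul_right_comm, hβx, one_mul]

theorem eq_of_xiMap_add_eq {β β' : IncidenceAlgebra K X} (hβ : IsUnit β) (hβ' : IsUnit β')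
    {ν ν' : IncidenceAlgebra K X →ₗ[K] IncidenceAlgebra K X}
    (hν : ∀ f, ∃ c : K, ν f = c • (1 : IncidenceAlgebra K X))
    (hν' : ∀ f, ∃ c : K, ν' f = c • (1 : IncidenceAlgebra K X))
    (h : ∀ f, xiMap β f + ν f = xiMap β' f + ν' f) : ν = ν' := by
  ext f x y _
  obtain ⟨c, hc⟩ := hν f
  obtain ⟨c', hc'⟩ := hν' f
  have hcc' : c = c' := by
    simpa [hc, hc', xiMap_apply_self, hβ, hβ'] using congrArg (· x x) (h f)
  rw [hc, hc', hcc']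

end PartialOrder

section HomJacobi

theorem homJacobi_sub_id_iff {A : Type*} [LieRing A] {φ : A → A} :
    HomJacobi (fun a ↦ φ a - a) ↔ HomJacobi φ := by
  refine forall₃_congr fun a b c ↦ ?_
  have hJacobi : ⁅⁅a, b⁆, c⁆ + ⁅⁅b, c⁆, a⁆ + ⁅⁅c, a⁆, b⁆ = 0 := by
    rw [← lie_skew ⁅a, b⁆, ← lie_skew ⁅b, c⁆, ← lie_skew ⁅c, a⁆, ← neg_eq_zero, ← lie_jacobi a b c]
    abel
  rw [lie_sub, lie_sub, lie_sub, ← sub_zero (_ + _ + ⁅⁅c, a⁆, φ b⁆), ← hJacobi]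
  exact Eq.congr_left (by abel)

variable {K : Type*} [Field K] {X : Type*} [PartialOrder X] [DecidableEq X] [LocallyFiniteOrder X]
  {ψ : IncidenceAlgebra K X → IncidenceAlgebra K X}

theorem HomJacobi.lie_eSingle_diag_of_ne (hψ : HomJacobi ψ) {x y k : X} (h : x < y)
    (hx : k ≠ x) (hy : k ≠ y) : ⁅eSingle K x y h.le, ψ (eSingle K k k le_rfl)⁆ = 0 := by
  simpa [lie_eSingle_eSingle, lie_eSingle_eSingle_of_ne, h.ne, hx, hx.symm, hy.symm] using
    hψ (eSingle K x x le_rfl) (eSingle K x y h.le) (eSingle K k k le_rfl)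

theorem HomJacobi.lie_eSingle_diag_add (hψ : HomJacobi ψ) {x y : X} (h : x < y) :
    ⁅eSingle K x y h.le, ψ (eSingle K x x le_rfl) + ψ (eSingle K y y le_rfl)⁆ = 0 := by
  rw [add_comm, lie_add]
  simpa [lie_eSingle_eSingle, lie_eSingle_eSingle_of_ne, h.ne, h.ne'] using
    hψ (eSingle K x x le_rfl) (eSingle K x y h.le) (eSingle K y y le_rfl)

end HomJacobi

section Corner

variable (K : Type*) [Field K] (X : Type*) [PartialOrder X] [DecidableEq X] [BoundedOrder X]

/-- The matrix unit `e_{⊥⊤}` in the top right corner; it spans the center of the radical. -/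
abbrev corner : IncidenceAlgebra K X :=
  eSingle K ⊥ ⊤ bot_le

/-- The centralizer of the Jacobson radical `J` of `I(X,K)`. It is encoded by its explicit form
`Z(I(X,K)) ⊕ Z(J)`, the span of the identity and the corner. -/
def radicalCentralizer : Submodule K (IncidenceAlgebra K X) :=
  Submodule.span K {1, corner K X}

variable {K X} {f : IncidenceAlgebra K X}

theorem eq_add_of_mem_radicalCentralizer [Nontrivial X] (hf : f ∈ radicalCentralizer K X) :
    f = f ⊥ ⊥ • 1 + f ⊥ ⊤ • corner K X := by
  obtain ⟨a, b, rfl⟩ := Submodule.mem_span_pair.1 hf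
  simp [eSingle_apply]

theorem mem_radicalCentralizer_of_apply (hdiag : ∀ x, f x x = f ⊥ ⊥)
    (hoff : ∀ x y, x < y → x ≠ ⊥ ∨ y ≠ ⊤ → f x y = 0) : f ∈ radicalCentralizer K X := by
  rcases subsingleton_or_nontrivial X with hX | hX
  · refine Submodule.mem_span_pair.2 ⟨f ⊥ ⊥, 0, ?_⟩
    ext x y _
    simp [Subsingleton.elim x ⊥, Subsingleton.elim y ⊥]
  refine Submodule.mem_span_pair.2 ⟨f ⊥ ⊥, f ⊥ ⊤, ?_⟩
  ext x y hxy
  rcases hxy.eq_or_lt with rfl | hxy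
  · simp [eSingle_apply_diag (bot_lt_top (α := X)), hdiag x]
  by_cases h : x = ⊥ ∧ y = ⊤
  · simp [h.1, h.2, eSingle_apply]
  · simp [eSingle_apply, h, hxy.ne, hoff x y hxy (not_and_or.1 h)]

variable [LocallyFiniteOrder X]

theorem corner_mul (f : IncidenceAlgebra K X) : corner K X * f = f ⊤ ⊤ • corner K X := by
  ext u v _
  rw [eSingle_mul_apply, constSMul_apply, eSingle_apply]
  by_cases hv : v = ⊤
  · simp [hv]
  · simp [hv, apply_eq_zero_of_not_le (mt top_le_iff.1 hv) f]

theorem mul_corner (f : IncidenceAlgebra K X) : f * corner K X = f ⊥ ⊥ • corner K X := by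
  ext u v _
  rw [mul_eSingle_apply, constSMul_apply, eSingle_apply]
  by_cases hu : u = ⊥
  · simp [hu]
  · simp [hu, apply_eq_zero_of_not_le (mt le_bot_iff.1 hu) f]

theorem lie_corner (f : IncidenceAlgebra K X) :
    ⁅f, corner K X⁆ = (f ⊥ ⊥ - f ⊤ ⊤) • corner K X := by
  rw [Ring.lie_def, corner_mul, mul_corner, sub_smul]

theorem lie_eq_zero_of_mem_radicalCentralizer {g : IncidenceAlgebra K X}
    (hg : ∀ x, g x x = 0) (hf : f ∈ radicalCentralizer K X) : ⁅g, f⁆ = 0 := by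
  obtain ⟨a, b, rfl⟩ := Submodule.mem_span_pair.1 hf
  rw [lie_add, lie_smul, lie_smul, lie_corner, hg, hg, Ring.lie_def, mul_one, one_mul]
  simp

theorem HomJacobi.of_sub_mem_radicalCentralizer {φ : IncidenceAlgebra K X → IncidenceAlgebra K X}
    (h : ∀ f, φ f - f ∈ radicalCentralizer K X) : HomJacobi φ := by
  have hψ (a b c : IncidenceAlgebra K X) : ⁅⁅a, b⁆, φ c - c⁆ = 0 :=
    lie_eq_zero_of_mem_radicalCentralizer (incidence_lie_apply_self a b) (h c)
  refine homJacobi_sub_id_iff.1 fun a b c ↦ ?_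
  rw [hψ, hψ, hψ, add_zero, add_zero]

theorem mem_radicalCentralizer_of_lie_eSingle
    (hf : ∀ (x y : X) (h : x < y), ⁅eSingle K x y h.le, f⁆ = 0) : f ∈ radicalCentralizer K X := by
  refine mem_radicalCentralizer_of_apply (fun x ↦ ?_) fun x y hxy hor ↦ ?_
  · rcases eq_bot_or_bot_lt x with rfl | hx
    · rfl
    · exact (apply_diag_eq_of_lie_eSingle (hf ⊥ x hx)).symm
  · rcases hor with hx | hy
    · exact apply_row_eq_zero_of_lie_eSingle (hf ⊥ x hx.bot_lt) hxy.ne'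
    · exact apply_col_eq_zero_of_lie_eSingle (hf y ⊤ hy.lt_top) hxy.ne

end Corner

section LieAutomorphism

variable {K : Type*} [Field K] {X : Type*} [PartialOrder X] [DecidableEq X] [LocallyFiniteOrder X]

theorem lieEquiv_eSingle_apply_self (φ : IncidenceAlgebra K X ≃ₗ⁅K⁆ IncidenceAlgebra K X)
    {x y : X} (h : x < y) (z : X) : φ (eSingle K x y h.le) z z = 0 := by
  rw [← lie_eSingle_eSingle le_rfl h.le h.ne, LieEquiv.map_lie, incidence_lie_apply_self]

variable [BoundedOrder X] (φ : IncidenceAlgebra K X ≃ₗ⁅K⁆ IncidenceAlgebra K X)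

theorem lieEquiv_corner_mem_radicalCentralizer : φ (corner K X) ∈ radicalCentralizer K X := by
  have hcorner : corner K X ∈ radicalCentralizer K X := Submodule.subset_span (by simp)
  refine mem_radicalCentralizer_of_lie_eSingle fun x y h ↦ ?_
  rw [← φ.apply_symm_apply (eSingle K x y h.le), ← LieEquiv.map_lie,
    lie_eq_zero_of_mem_radicalCentralizer (lieEquiv_eSingle_apply_self φ.symm h) hcorner, map_zero]

variable [Nontrivial X]

theorem lieEquiv_corner_eq_smul : φ (corner K X) = φ (corner K X) ⊥ ⊤ • corner K X := by
  simpa only [lieEquiv_eSingle_apply_self φ bot_lt_top, zero_smul, zero_add] using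
    eq_add_of_mem_radicalCentralizer (lieEquiv_corner_mem_radicalCentralizer φ)

theorem lieEquiv_corner_apply_ne_zero : φ (corner K X) ⊥ ⊤ ≠ 0 := fun h0 ↦
  eSingle_ne_zero bot_le <| (map_eq_zero_iff φ φ.injective).1 <|
    (lieEquiv_corner_eq_smul φ).trans (by rw [h0, zero_smul])

theorem lieEquiv_eSingle_bot_apply_bot :
    φ (eSingle K ⊥ ⊥ le_rfl) ⊥ ⊥ = φ (eSingle K ⊥ ⊥ le_rfl) ⊤ ⊤ + 1 := by
  have hlie := congrArg (φ · ⊥ ⊤)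
    (lie_eSingle_eSingle (K := K) le_rfl bot_le (bot_ne_top (α := X)))
  rw [LieEquiv.map_lie, lieEquiv_corner_eq_smul, lie_smul, lie_corner] at hlie
  simp only [constSMul_apply, eSingle_apply_same, smul_eq_mul, mul_one] at hlie
  rw [← sub_eq_iff_eq_add']
  exact (mul_eq_left₀ (lieEquiv_corner_apply_ne_zero φ)).1 hlie

end LieAutomorphism

section Chain

variable {K : Type*} [Field K] {X : Type*} [LinearOrder X] [LocallyFiniteOrder X]

theorem HomJacobi.eSingle_diag_apply_eq {ψ : IncidenceAlgebra K X → IncidenceAlgebra K X}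
    (hψ : HomJacobi ψ) {k x y : X} (hx : k ≠ x) (hy : k ≠ y) :
    ψ (eSingle K k k le_rfl) x x = ψ (eSingle K k k le_rfl) y y := by
  rcases lt_trichotomy x y with h | rfl | h
  · exact apply_diag_eq_of_lie_eSingle (hψ.lie_eSingle_diag_of_ne h hx hy)
  · rfl
  · exact (apply_diag_eq_of_lie_eSingle (hψ.lie_eSingle_diag_of_ne h hy hx)).symm

variable [BoundedOrder X]

theorem HomJacobi.eSingle_diag_apply_eq_zero_of_Ioo
    {ψ : IncidenceAlgebra K X → IncidenceAlgebra K X} (hψ : HomJacobi ψ) (k : X) {p q : X}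
    (hp : p ≠ ⊥) (hpq : p < q) (hq : q ≠ ⊤) : ψ (eSingle K k k le_rfl) p q = 0 := by
  by_cases hk : k = ⊥ ∨ k = p
  · have hkq : k < q := hk.elim (· ▸ bot_le.trans_lt hpq) (· ▸ hpq)
    exact apply_col_eq_zero_of_lie_eSingle
      (hψ.lie_eSingle_diag_of_ne hq.lt_top hkq.ne (hkq.trans hq.lt_top).ne) hpq.ne
  · rw [not_or] at hk
    exact apply_row_eq_zero_of_lie_eSingle
      (hψ.lie_eSingle_diag_of_ne hp.bot_lt hk.1 hk.2) hpq.ne'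

variable {φ : IncidenceAlgebra K X ≃ₗ⁅K⁆ IncidenceAlgebra K X} (hφ : HomJacobi φ)
include hφ

theorem HomJacobi.eSingle_diag_apply_self {k x : X} (hx : k ≠ x) :
    φ (eSingle K k k le_rfl) k k = φ (eSingle K k k le_rfl) x x + 1 := by
  have : Nontrivial X := ⟨k, x, hx⟩
  rcases eq_bot_or_bot_lt k with rfl | hk
  · rw [lieEquiv_eSingle_bot_apply_bot, hφ.eSingle_diag_apply_eq bot_ne_top hx]
  have hbot := lieEquiv_eSingle_bot_apply_bot φ
  have hadd := apply_diag_eq_of_lie_eSingle (hφ.lie_eSingle_diag_add hk)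
  rw [IncidenceAlgebra.add_apply, IncidenceAlgebra.add_apply,
    hφ.eSingle_diag_apply_eq hk.ne bot_ne_top] at hadd
  rw [hφ.eSingle_diag_apply_eq hx hk.ne']
  linear_combination hbot - hadd

theorem HomJacobi.eSingle_diag_apply_top_eq_zero (k : X) {p : X} (hp : p ≠ ⊥) (hp' : p ≠ ⊤) :
    φ (eSingle K k k le_rfl) p ⊤ = 0 := by
  have hadd := apply_row_eq_zero_of_lie_eSingle (hφ.lie_eSingle_diag_add hp.bot_lt) hp'.symm
  have hbot : φ (eSingle K ⊥ ⊥ le_rfl) p ⊤ = 0 := by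
    have hlie := congrArg (φ · p ⊤)
      (lie_eSingle_eSingle_of_ne (K := K) (le_refl ⊥) (le_refl p) hp.symm hp)
    have hmid (k l z : X) (hz : p < z) (hz' : z < ⊤) :
        φ (eSingle K k k le_rfl) p z * φ (eSingle K l l le_rfl) z ⊤ = 0 := by
      rw [hφ.eSingle_diag_apply_eq_zero_of_Ioo k hp hz hz'.ne, zero_mul]
    rw [LieEquiv.map_lie, incidence_lie_apply_of_Ioo hp'.lt_top (hmid ⊥ p) (hmid p ⊥),
      hφ.eSingle_diag_apply_eq hp.symm (bot_le.trans_lt hp'.lt_top).ne,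
      hφ.eSingle_diag_apply_self hp', map_zero] at hlie
    simpa using hlie
  rw [IncidenceAlgebra.add_apply, hbot, zero_add] at hadd
  by_cases hk : k = ⊥ ∨ k = p
  · rcases hk with rfl | rfl
    · exact hbot
    · exact hadd
  · rw [not_or] at hk
    exact apply_row_eq_zero_of_lie_eSingle
      (hφ.lie_eSingle_diag_of_ne hp.bot_lt hk.1 hk.2) hp'.symm

theorem HomJacobi.eSingle_diag_apply_bot_eq_zero (k : X) {q : X} (hq : q ≠ ⊥) (hq' : q ≠ ⊤) :
    φ (eSingle K k k le_rfl) ⊥ q = 0 := by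
  have hadd := apply_col_eq_zero_of_lie_eSingle (hφ.lie_eSingle_diag_add hq'.lt_top) hq.symm
  have htop : φ (eSingle K ⊤ ⊤ le_rfl) ⊥ q = 0 := by
    have hlie := congrArg (φ · ⊥ q)
      (lie_eSingle_eSingle_of_ne (K := K) (le_refl ⊤) (le_refl q) hq'.symm hq')
    have hmid (k l z : X) (hz : ⊥ < z) (hz' : z < q) :
        φ (eSingle K k k le_rfl) ⊥ z * φ (eSingle K l l le_rfl) z q = 0 := by
      rw [hφ.eSingle_diag_apply_eq_zero_of_Ioo l hz.ne' hz' hq', mul_zero]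
    rw [LieEquiv.map_lie, incidence_lie_apply_of_Ioo hq.bot_lt (hmid ⊤ q) (hmid q ⊤),
      hφ.eSingle_diag_apply_eq (hq.bot_lt.trans_le le_top).ne' hq'.symm,
      hφ.eSingle_diag_apply_self hq, map_zero] at hlie
    simpa using hlie
  rw [IncidenceAlgebra.add_apply, htop, add_zero] at hadd
  by_cases hk : k = ⊤ ∨ k = q
  · rcases hk with rfl | rfl
    · exact htop
    · exact hadd
  · rw [not_or] at hk
    exact apply_col_eq_zero_of_lie_eSingle
      (hφ.lie_eSingle_diag_of_ne hq'.lt_top hk.2 hk.1) hq.symm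

theorem HomJacobi.eSingle_diag_sub_mem (k : X) :
    φ (eSingle K k k le_rfl) - eSingle K k k le_rfl ∈ radicalCentralizer K X := by
  have hdiag (x : X) : (φ (eSingle K k k le_rfl) - eSingle K k k le_rfl) x x =
      (φ (eSingle K k k le_rfl) - eSingle K k k le_rfl) k k := by
    rcases eq_or_ne k x with rfl | hx
    · rfl
    · simp [hφ.eSingle_diag_apply_self hx, eSingle_apply, hx.symm]
  refine mem_radicalCentralizer_of_apply (fun x ↦ (hdiag x).trans (hdiag ⊥).symm)
    fun p q hpq hor ↦ ?_
  have hkpq : eSingle K k k le_rfl p q = 0 := if_neg fun h ↦ hpq.ne (h.1.trans h.2.symm)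
  rw [IncidenceAlgebra.sub_apply, hkpq, sub_zero]
  by_cases hp : p = ⊥
  · subst hp
    exact hφ.eSingle_diag_apply_bot_eq_zero k hpq.ne' (hor.resolve_left (not_not_intro rfl))
  by_cases hq : q = ⊤
  · subst hq
    exact hφ.eSingle_diag_apply_top_eq_zero k hp hpq.ne
  · exact hφ.eSingle_diag_apply_eq_zero_of_Ioo k hp hpq hq

theorem HomJacobi.lie_eSingle_diag_eq (k : X) {g : IncidenceAlgebra K X} (hg : ∀ x, g x x = 0) :
    ⁅φ (eSingle K k k le_rfl), g⁆ = ⁅eSingle K k k le_rfl, g⁆ := by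
  rw [← sub_eq_zero, ← sub_lie, ← lie_skew,
    lie_eq_zero_of_mem_radicalCentralizer hg (hφ.eSingle_diag_sub_mem k), neg_zero]

theorem HomJacobi.eSingle_eq_smul {x y : X} (h : x < y) :
    φ (eSingle K x y h.le) = φ (eSingle K x y h.le) x y • eSingle K x y h.le := by
  have hxy : ⁅⁅eSingle K x x le_rfl, eSingle K x y h.le⁆, eSingle K y y le_rfl⁆ =
      eSingle K x y h.le := by
    rw [lie_eSingle_eSingle _ _ h.ne, lie_eSingle_eSingle _ _ h.ne]
  calc φ (eSingle K x y h.le)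
      = ⁅⁅φ (eSingle K x x le_rfl), φ (eSingle K x y h.le)⁆, φ (eSingle K y y le_rfl)⁆ := by
        rw [← LieEquiv.map_lie, ← LieEquiv.map_lie, hxy]
    _ = ⁅⁅eSingle K x x le_rfl, φ (eSingle K x y h.le)⁆, eSingle K y y le_rfl⁆ := by
        rw [hφ.lie_eSingle_diag_eq x (lieEquiv_eSingle_apply_self φ h), ← lie_skew,
          hφ.lie_eSingle_diag_eq y (incidence_lie_apply_self _ _), lie_skew]
    _ = φ (eSingle K x y h.le) x y • eSingle K x y h.le := lie_lie_eSingle_self h _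

theorem HomJacobi.eSingle_apply_eq_one {x y : X} (h : x < y) (hxy : x ≠ ⊥ ∨ y ≠ ⊤) :
    φ (eSingle K x y h.le) x y = 1 := by
  have hψ := homJacobi_sub_id_iff.2 hφ
  have hψφ : φ (eSingle K x y h.le) - eSingle K x y h.le =
      (φ (eSingle K x y h.le) x y - 1) • eSingle K x y h.le := by
    rw [sub_smul, one_smul, ← hφ.eSingle_eq_smul h]
  have hdiag {p q : X} (hpq : p < q) (k : X) :
      ⁅eSingle K p q hpq.le, φ (eSingle K k k le_rfl) - eSingle K k k le_rfl⁆ = 0 :=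
    lie_eq_zero_of_mem_radicalCentralizer (eSingle_apply_diag hpq) (hφ.eSingle_diag_sub_mem k)
  rw [← sub_eq_zero]
  rcases hxy with hx | hy
  · have hy := bot_le.trans_lt h
    have hJ := hψ (eSingle K ⊥ x bot_le) (eSingle K x y h.le) (eSingle K ⊥ ⊥ le_rfl)
    simpa [hψφ, lie_eSingle_eSingle, lie_eSingle_eSingle_of_ne, hdiag hy, hx.symm, hx, hy.ne,
      hy.ne', eSingle_ne_zero] using hJ
  · have hx := h.trans_le le_top
    have hJ := hψ (eSingle K y ⊤ le_top) (eSingle K ⊤ ⊤ le_rfl) (eSingle K x y h.le)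
    have hlie : ⁅eSingle K y ⊤ le_top, eSingle K x y h.le⁆ = -eSingle K x ⊤ le_top := by
      rw [← lie_skew, lie_eSingle_eSingle _ _ hx.ne]
    simpa [hψφ, hlie, lie_eSingle_eSingle, lie_eSingle_eSingle_of_ne, hdiag hx, hy.symm, hy, hx.ne,
      hx.ne', eSingle_ne_zero] using hJ

theorem HomJacobi.eSingle_sub_mem {x y : X} (h : x < y) :
    φ (eSingle K x y h.le) - eSingle K x y h.le ∈ radicalCentralizer K X := by
  by_cases hxy : x = ⊥ ∧ y = ⊤
  · obtain ⟨rfl, rfl⟩ := hxy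
    have hcorner : corner K X ∈ radicalCentralizer K X := Submodule.subset_span (by simp)
    rw [hφ.eSingle_eq_smul h]
    exact sub_mem (Submodule.smul_mem _ _ hcorner) hcorner
  · rw [hφ.eSingle_eq_smul h, hφ.eSingle_apply_eq_one h (not_and_or.1 hxy), one_smul, sub_self]
    exact zero_mem _

theorem HomJacobi.sub_mem_radicalCentralizer (f : IncidenceAlgebra K X) :
    φ f - f ∈ radicalCentralizer K X := by
  refine mem_radicalCentralizer_of_lie_eSingle fun x y h ↦ ?_
  have hJ := homJacobi_sub_id_iff.2 hφ (eSingle K x x le_rfl) (eSingle K x y h.le) f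
  simpa only [lie_eSingle_eSingle le_rfl h.le h.ne, add_zero,
    lie_eq_zero_of_mem_radicalCentralizer (incidence_lie_apply_self _ _)
      (hφ.eSingle_diag_sub_mem x),
    lie_eq_zero_of_mem_radicalCentralizer (incidence_lie_apply_self _ _)
      (hφ.eSingle_sub_mem h)] using hJ

end Chain

section Commutator

variable {K : Type*} [Field K] {X : Type*} [PartialOrder X] [DecidableEq X] [LocallyFiniteOrder X]

theorem sum_eSingle_diag_mul [Fintype X] (f : IncidenceAlgebra K X) :
    ∑ x, eSingle K x x le_rfl * f = f := by
  have hsum : ∑ x : X, eSingle K x x le_rfl = (1 : IncidenceAlgebra K X) := by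
    ext u v _
    let entry : IncidenceAlgebra K X →+ K := ⟨⟨(· u v), rfl⟩, fun _ _ ↦ rfl⟩
    change entry _ = _
    rw [map_sum]
    simp [entry, eSingle_apply, one_apply, ite_and, eq_comm]
  rw [← Finset.sum_mul, hsum, one_mul]

theorem map_eq_zero_of_map_lie_eq_zero [Finite X] {M F : Type*} [AddCommMonoid M]
    [FunLike F (IncidenceAlgebra K X) M] [AddMonoidHomClass F (IncidenceAlgebra K X) M] {a : F}
    (ha : ∀ g h : IncidenceAlgebra K X, a ⁅g, h⁆ = 0) {f : IncidenceAlgebra K X}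
    (hf : ∀ x, f x x = 0) : a f = 0 := by
  have := Fintype.ofFinite X
  have hrow (x : X) : eSingle K x x le_rfl * f =
      ⁅eSingle K x x le_rfl, eSingle K x x le_rfl * f⁆ := by
    have hx : eSingle K x x le_rfl * f * eSingle K x x le_rfl = 0 := by
      ext u v _
      rw [mul_eSingle_apply, eSingle_mul_apply, hf, ite_self, ite_self,
        IncidenceAlgebra.zero_apply]
    rw [Ring.lie_def, hx, ← mul_assoc, eSingle_mul_eSingle, sub_zero]
  rw [← sum_eSingle_diag_mul f, map_sum]
  exact Finset.sum_eq_zero fun x _ ↦ by rw [hrow, ha]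

end Commutator

section Components

variable {K : Type*} [Field K] {X : Type*} [PartialOrder X] [DecidableEq X] [BoundedOrder X]
  [LocallyFiniteOrder X] (φ : IncidenceAlgebra K X ≃ₗ⁅K⁆ IncidenceAlgebra K X)

/-- When `φ - id` takes values in `K·δ ⊕ K·e_{⊥⊤}`, its coefficient at `δ`. -/
def centralPart : IncidenceAlgebra K X →ₗ[K] K where
  toFun f := (φ f - f) ⊥ ⊥
  map_add' f g := by rw [map_add, add_sub_add_comm, IncidenceAlgebra.add_apply]
  map_smul' c f := by rw [map_smul, ← smul_sub, constSMul_apply, RingHom.id_apply]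

/-- When `φ - id` takes values in `K·δ ⊕ K·e_{⊥⊤}`, its coefficient at `e_{⊥⊤}`. -/
def cornerPart : IncidenceAlgebra K X →ₗ[K] K where
  toFun f := (φ f - f) ⊥ ⊤
  map_add' f g := by rw [map_add, add_sub_add_comm, IncidenceAlgebra.add_apply]
  map_smul' c f := by rw [map_smul, ← smul_sub, constSMul_apply, RingHom.id_apply]

variable {φ}

theorem centralPart_apply (f : IncidenceAlgebra K X) : centralPart φ f = (φ f - f) ⊥ ⊥ :=
  rfl

theorem cornerPart_apply (f : IncidenceAlgebra K X) : cornerPart φ f = (φ f - f) ⊥ ⊤ :=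
  rfl

variable [Nontrivial X] (hφ : ∀ f, φ f - f ∈ radicalCentralizer K X)
include hφ

theorem eq_add_centralPart_add_cornerPart (f : IncidenceAlgebra K X) :
    φ f = f + (centralPart φ f • 1 + cornerPart φ f • corner K X) :=
  sub_eq_iff_eq_add'.1 (eq_add_of_mem_radicalCentralizer (hφ f))

theorem lieEquiv_lie_sub_lie (g h : IncidenceAlgebra K X) :
    φ ⁅g, h⁆ - ⁅g, h⁆ = (cornerPart φ h * (g ⊥ ⊥ - g ⊤ ⊤) - cornerPart φ g * (h ⊥ ⊥ - h ⊤ ⊤)) •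
      corner K X := by
  have hone (f : IncidenceAlgebra K X) : ⁅f, (1 : IncidenceAlgebra K X)⁆ = 0 := by
    rw [Ring.lie_def, mul_one, one_mul, sub_self]
  have hone' (f : IncidenceAlgebra K X) : ⁅(1 : IncidenceAlgebra K X), f⁆ = 0 := by
    rw [← lie_skew, hone, neg_zero]
  have hcorner (f : IncidenceAlgebra K X) : ⁅corner K X, f⁆ = (f ⊤ ⊤ - f ⊥ ⊥) • corner K X := by
    rw [← lie_skew, lie_corner, ← neg_smul, neg_sub]
  rw [LieEquiv.map_lie, eq_add_centralPart_add_cornerPart hφ g,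
    eq_add_centralPart_add_cornerPart hφ h]
  simp only [add_lie, lie_add, smul_lie, lie_smul, hone, hone', lie_corner, hcorner,
    eSingle_apply_diag (bot_lt_top (α := X))]
  module

theorem centralPart_lie (g h : IncidenceAlgebra K X) : centralPart φ ⁅g, h⁆ = 0 := by
  simpa [centralPart_apply, eSingle_apply_diag (bot_lt_top (α := X))] using
    congrArg (· ⊥ ⊥) (lieEquiv_lie_sub_lie hφ g h)

theorem cornerPart_lie (g h : IncidenceAlgebra K X) : cornerPart φ ⁅g, h⁆ =
    cornerPart φ h * (g ⊥ ⊥ - g ⊤ ⊤) - cornerPart φ g * (h ⊥ ⊥ - h ⊤ ⊤) := by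
  simpa [cornerPart_apply, eSingle_apply_same] using
    congrArg (· ⊥ ⊤) (lieEquiv_lie_sub_lie hφ g h)

theorem cornerPart_eq (f : IncidenceAlgebra K X) : cornerPart φ f =
    cornerPart φ (corner K X) * f ⊥ ⊤ +
      cornerPart φ (eSingle K ⊥ ⊥ le_rfl) * (f ⊥ ⊥ - f ⊤ ⊤) := by
  have h := congrArg (cornerPart φ) (lie_lie_eSingle_self bot_lt_top f)
  simp only [map_smul, cornerPart_lie hφ, incidence_lie_apply_self] at h
  simp only [sub_self, mul_zero, eSingle_apply, and_self, ↓reduceIte, top_ne_bot, sub_zero, mul_one,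
    bot_ne_top, zero_sub, mul_neg, neg_sub, smul_eq_mul] at h
  linear_combination h

theorem lieEquiv_corner_apply_eq_one {z : X} (hz : z ≠ ⊥) (hz' : z ≠ ⊤) :
    φ (corner K X) ⊥ ⊤ = 1 := by
  rw [← sub_eq_zero, ← eSingle_apply_same (K := K) (bot_le (a := (⊤ : X))),
    ← IncidenceAlgebra.sub_apply, ← cornerPart_apply, corner,
    ← lie_eSingle_eSingle bot_le (le_top (a := z)) bot_ne_top, cornerPart_lie hφ]
  simp [eSingle_apply_diag, hz.bot_lt, hz'.lt_top]

end Components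

section CornerUnit

variable (K : Type*) [Field K] (X : Type*) [PartialOrder X] [DecidableEq X] [BoundedOrder X]
  [LocallyFiniteOrder X]

/-- The matrix which is `t` at `(⊥, ⊥)`, `u` at `(⊥, ⊤)`, and agrees with the identity at all other
entries. Conjugation by such matrices accounts for the corner part of a regular Hom-Lie
structure. -/
def cornerUnit (t u : K) : IncidenceAlgebra K X :=
  1 + (t - 1) • eSingle K ⊥ ⊥ le_rfl + u • corner K X

variable {K X} [Nontrivial X]

theorem cornerUnit_mul_cornerUnit (t u t' u' : K) :
    cornerUnit K X t u * cornerUnit K X t' u' = cornerUnit K X (t * t') (t * u' + u) := by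
  simp only [cornerUnit, mul_add, add_mul, mul_one, one_mul, smul_mul_assoc, mul_smul_comm,
    eSingle_mul_eSingle, eSingle_mul_eSingle_of_ne, ne_eq, top_ne_bot, not_false_eq_true, smul_zero]
  module

theorem isUnit_cornerUnit {t : K} (ht : t ≠ 0) (u : K) : IsUnit (cornerUnit K X t u) := by
  have hone : cornerUnit K X 1 0 = 1 := by simp [cornerUnit]
  refine ⟨⟨cornerUnit K X t u, cornerUnit K X t⁻¹ (-(t⁻¹ * u)), ?_, ?_⟩, rfl⟩
  · rw [cornerUnit_mul_cornerUnit, mul_inv_cancel₀ ht, mul_neg, mul_inv_cancel_left₀ ht,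
      neg_add_cancel, hone]
  · rw [cornerUnit_mul_cornerUnit, inv_mul_cancel₀ ht, add_neg_cancel, hone]

theorem xiMap_cornerUnit {t : K} (ht : t ≠ 0) (h : t = 1 ∨ ∀ x : X, x = ⊥ ∨ x = ⊤) (u : K)
    (f : IncidenceAlgebra K X) : xiMap (cornerUnit K X t u) f =
      f + ((t - 1) * f ⊥ ⊤ - u * (f ⊥ ⊥ - f ⊤ ⊤)) • corner K X := by
  have hlie : (t - 1) • ⁅eSingle K (⊥ : X) ⊥ le_rfl, f⁆ = ((t - 1) * f ⊥ ⊤) • corner K X := by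
    rcases h with rfl | hX
    · simp
    rw [mul_smul]
    congr 1
    ext x y hxy
    rcases hX x with rfl | rfl <;> rcases hX y with rfl | rfl <;>
      simp [lie_eSingle_apply, eSingle_apply] at hxy ⊢
  rw [Ring.lie_def, smul_sub, sub_eq_iff_eq_add] at hlie
  rw [xiMap_eq_iff (isUnit_cornerUnit ht u)]
  simp only [cornerUnit, mul_add, add_mul, mul_one, one_mul, smul_mul_assoc, mul_smul_comm,
    mul_corner, corner_mul, hlie]
  simp only [eSingle_apply, top_ne_bot, and_self, ↓reduceIte, zero_smul, smul_zero, add_zero,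
    bot_ne_top, and_false]
  module

end CornerUnit

section Conjugation

variable {K : Type*} [Field K] {X : Type*} [PartialOrder X] [DecidableEq X] [BoundedOrder X]
  [LocallyFiniteOrder X]

theorem cornerUnit_one_apply_of_not_isMin_or (u : K) {x y : X} (h : x < y)
    (hxy : ¬IsMin x ∨ ¬IsMax y) : cornerUnit K X 1 u x y = 0 := by
  rw [isMin_iff_eq_bot, isMax_iff_eq_top, ← not_and_or] at hxy
  simp [cornerUnit, eSingle_apply, h.ne, hxy]

theorem xiMap_sub_mem_radicalCentralizer (hX : ∀ x : X, x = ⊥ ∨ x = ⊤) {β : IncidenceAlgebra K X}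
    (hβ : IsUnit β) (f : IncidenceAlgebra K X) : xiMap β f - f ∈ radicalCentralizer K X := by
  have hdiag (x : X) : (xiMap β f - f) x x = 0 := by
    rw [IncidenceAlgebra.sub_apply, xiMap_apply_self hβ, sub_self]
  refine mem_radicalCentralizer_of_apply (fun x ↦ (hdiag x).trans (hdiag ⊥).symm)
    fun x y hxy hor ↦ absurd hor ?_
  rw [not_or, not_not, not_not]
  exact ⟨(hX x).resolve_right hxy.ne_top, (hX y).resolve_left hxy.ne_bot⟩

theorem HomJacobi.of_eq_xiMap_add {φ ν : IncidenceAlgebra K X → IncidenceAlgebra K X}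
    {β : IncidenceAlgebra K X} (hβ : ∀ f, xiMap β f - f ∈ radicalCentralizer K X)
    (hν : ∀ f, ∃ c : K, ν f = c • (1 : IncidenceAlgebra K X))
    (hφ : ∀ f, φ f = xiMap β f + ν f) : HomJacobi φ := by
  refine .of_sub_mem_radicalCentralizer fun f ↦ ?_
  obtain ⟨c, hc⟩ := hν f
  rw [hφ, hc, add_sub_right_comm]
  exact add_mem (hβ f) (Submodule.smul_mem _ c (Submodule.subset_span (by simp)))

variable [Nontrivial X]

theorem cornerUnit_one_apply_self (u : K) (x : X) : cornerUnit K X 1 u x x = 1 := by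
  simp [cornerUnit, eSingle_apply_diag (bot_lt_top (α := X))]

theorem eq_cornerUnit_one {β : IncidenceAlgebra K X} (hdiag : ∀ x, β x x = 1)
    (hoff : ∀ x y, x < y → ¬IsMin x ∨ ¬IsMax y → β x y = 0) :
    β = cornerUnit K X 1 (β ⊥ ⊤) := by
  simp only [isMin_iff_eq_bot, isMax_iff_eq_top] at hoff
  have hβ := mem_radicalCentralizer_of_apply (fun x ↦ (hdiag x).trans (hdiag ⊥).symm) hoff
  rw [cornerUnit, sub_self, zero_smul, add_zero, ← one_smul K (1 : IncidenceAlgebra K X), ← hdiag ⊥]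
  exact eq_add_of_mem_radicalCentralizer hβ

theorem xiMap_cornerUnit_one_sub_mem (u : K) (f : IncidenceAlgebra K X) :
    xiMap (cornerUnit K X 1 u) f - f ∈ radicalCentralizer K X := by
  rw [xiMap_cornerUnit one_ne_zero (.inl rfl), add_sub_cancel_left]
  exact Submodule.smul_mem _ _ (Submodule.subset_span (by simp))

theorem existsUnique_eq_xiMap_add {φ ν : IncidenceAlgebra K X → IncidenceAlgebra K X} {u : K}
    (hφ : ∀ f, φ f = xiMap (cornerUnit K X 1 u) f + ν f) :
    ∃! β : IncidenceAlgebra K X, IsUnit β ∧ (∀ x, β x x = 1) ∧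
      (∀ x y, x < y → ¬IsMin x ∨ ¬IsMax y → β x y = 0) ∧ ∀ f, φ f = xiMap β f + ν f := by
  refine ⟨cornerUnit K X 1 u, ⟨isUnit_cornerUnit one_ne_zero u, cornerUnit_one_apply_self u,
    fun x y ↦ cornerUnit_one_apply_of_not_isMin_or u, hφ⟩, ?_⟩
  rintro β ⟨-, hdiag, hoff, hβ⟩
  rw [eq_cornerUnit_one hdiag hoff] at hβ ⊢
  have hbot : xiMap (cornerUnit K X 1 (β ⊥ ⊤)) (eSingle K ⊥ ⊥ le_rfl) =
      xiMap (cornerUnit K X 1 u) (eSingle K ⊥ ⊥ le_rfl) :=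
    add_right_cancel ((hβ _).symm.trans (hφ _))
  rw [xiMap_cornerUnit one_ne_zero (.inl rfl), xiMap_cornerUnit one_ne_zero (.inl rfl)] at hbot
  have hu : β ⊥ ⊤ = u := by simpa [eSingle_apply] using congrArg (· ⊥ ⊤) hbot
  rw [hu]

variable {φ : IncidenceAlgebra K X ≃ₗ⁅K⁆ IncidenceAlgebra K X}

theorem eq_xiMap_cornerUnit_add_centralPart (hφ : ∀ f, φ f - f ∈ radicalCentralizer K X)
    (f : IncidenceAlgebra K X) : φ f =
      xiMap (cornerUnit K X (φ (corner K X) ⊥ ⊤) (-cornerPart φ (eSingle K ⊥ ⊥ le_rfl))) f +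
        centralPart φ f • 1 := by
  have ht : φ (corner K X) ⊥ ⊤ = 1 ∨ ∀ x : X, x = ⊥ ∨ x = ⊤ := by
    by_contra! h
    obtain ⟨ht, z, hz, hz'⟩ := h
    exact ht (lieEquiv_corner_apply_eq_one hφ hz hz')
  have hcorner : cornerPart φ (corner K X) = φ (corner K X) ⊥ ⊤ - 1 := by
    rw [cornerPart_apply, IncidenceAlgebra.sub_apply, eSingle_apply_same]
  rw [xiMap_cornerUnit (lieEquiv_corner_apply_ne_zero φ) ht, ← hcorner, neg_mul, sub_neg_eq_add,
    ← cornerPart_eq hφ, eq_add_centralPart_add_cornerPart hφ]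
  module

end Conjugation

theorem two_lt_card_iff_exists_ne_bot_ne_top {X : Type*} [PartialOrder X] [BoundedOrder X]
    [Nontrivial X] [Fintype X] : 2 < Fintype.card X ↔ ∃ z : X, z ≠ ⊥ ∧ z ≠ ⊤ := by
  classical
  rw [← Finset.card_pair (bot_ne_top (α := X)), Finset.card_lt_iff_ne_univ, Ne,
    Finset.eq_univ_iff_forall]
  simp

theorem stmt11 {K : Type*} [Field K] {X : Type*} [LinearOrder X] [Fintype X]
    [LocallyFiniteOrder X] (hcard : 2 ≤ Fintype.card X)
    (φ : IncidenceAlgebra K X ≃ₗ⁅K⁆ IncidenceAlgebra K X) :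
    HomJacobi ⇑φ ↔
      ∃ (β : IncidenceAlgebra K X)
        (ν : IncidenceAlgebra K X →ₗ[K] IncidenceAlgebra K X),
        IsUnit β ∧
        (∀ f, ∃ c : K, ν f = c • (1 : IncidenceAlgebra K X)) ∧
        (∀ f : IncidenceAlgebra K X, (∀ x, f x x = 0) → ν f = 0) ∧
        (∀ f, φ f = xiMap β f + ν f) ∧
        (∀ (β' : IncidenceAlgebra K X)
           (ν' : IncidenceAlgebra K X →ₗ[K] IncidenceAlgebra K X),
          IsUnit β' →
          (∀ f, ∃ c : K, ν' f = c • (1 : IncidenceAlgebra K X)) →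
          (∀ f : IncidenceAlgebra K X, (∀ x, f x x = 0) → ν' f = 0) →
          (∀ f, φ f = xiMap β' f + ν' f) → ν' = ν) ∧
        (2 < Fintype.card X →
          ∃! β' : IncidenceAlgebra K X,
            IsUnit β' ∧ (∀ x : X, β' x x = 1) ∧
            (∀ x y : X, x < y → (¬IsMin x ∨ ¬IsMax y) → β' x y = 0) ∧
            ∀ f, φ f = xiMap β' f + ν f) := by
  have : Nontrivial X := Fintype.one_lt_card_iff_nontrivial.1 hcard
  let := Fintype.toBoundedOrder X
  constructor
  · intro hφ
    have hmem := hφ.sub_mem_radicalCentralizer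
    have hφν := eq_xiMap_cornerUnit_add_centralPart hmem
    have hβ := isUnit_cornerUnit (X := X) (lieEquiv_corner_apply_ne_zero φ)
      (-cornerPart φ (eSingle K ⊥ ⊥ le_rfl))
    refine ⟨_, (centralPart φ).smulRight 1, hβ, fun f ↦ ⟨_, rfl⟩, fun f hf ↦ ?_, hφν,
      fun β' ν' hβ' hν' _ hφν' ↦ eq_of_xiMap_add_eq hβ' hβ hν' (fun f ↦ ⟨_, rfl⟩) fun f ↦
        (hφν' f).symm.trans (hφν f), fun hX ↦ ?_⟩
    · rw [LinearMap.smulRight_apply, map_eq_zero_of_map_lie_eq_zero (centralPart_lie hmem) hf,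
        zero_smul]
    · obtain ⟨z, hz, hz'⟩ := two_lt_card_iff_exists_ne_bot_ne_top.1 hX
      rw [lieEquiv_corner_apply_eq_one hmem hz hz'] at hφν
      exact existsUnique_eq_xiMap_add hφν
  · rintro ⟨β, ν, hβ, hν, -, hφν, -, hnormal⟩
    by_cases hX : ∃ z : X, z ≠ ⊥ ∧ z ≠ ⊤
    · obtain ⟨β', ⟨-, hdiag, hoff, hφν'⟩, -⟩ :=
        hnormal (two_lt_card_iff_exists_ne_bot_ne_top.2 hX)
      rw [eq_cornerUnit_one hdiag hoff] at hφν'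
      exact .of_eq_xiMap_add (xiMap_cornerUnit_one_sub_mem _) hν hφν'
    · push Not at hX
      exact .of_eq_xiMap_add (xiMap_sub_mem_radicalCentralizer
        (fun x ↦ or_iff_not_imp_left.2 (hX x)) hβ) hν hφν
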